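/- arXiv:1901.06951 — 2 statements merged into one kernel-verified Lean document; each statement's English description precedes it below -/
import Mathlib

section
/- Assume V ∈ C¹(ℝ^N), c ∈ ℝ, condition (V^c) and the coercivity condition (1.7), and let ρ₀ be as defined. Then there exists r̄ ∈ (0, ρ₀/2) such that for every r ∈ (0, r̄) there exist L_r > 0 and ν_r > 0 with the following property: for every q ∈ Γ_c satisfying dist(q(0), 𝒱^c) ≥ ρ₀, ‖q‖_{L^∞(ℝ,ℝ^N)} ≤ R and J_c(q) ≤ m_c + ν_r, one has (i) there is τ ∈ (0, L_r) with dist(q(τ), 𝒱^c₊) ≤ r and dist(q(t), 𝒱^c₊) < ρ₀ for all t ≥ τ, and (ii) there is σ ∈ (−L_r, 0) with dist(q(σ), 𝒱^c₋) ≤ r and dist(q(t), 𝒱^c₋) < ρ₀ for all t ≤ σ. -/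
open MeasureTheory Filter Metric Set Topology
open scoped ENNReal

noncomputable section

abbrev Euc (N : ℕ) := EuclideanSpace ℝ (Fin N)

def setDist {E : Type*} [PseudoMetricSpace E] (A B : Set E) : ℝ :=
  sInf ((fun p : E × E => dist p.1 p.2) '' (A ×ˢ B))

def IsH1loc {N : ℕ} (q q' : ℝ → Euc N) : Prop :=
  LocallyIntegrable q' volume ∧
  (∀ a b : ℝ, IntegrableOn (fun t => ‖q' t‖ ^ 2) (Icc a b) volume) ∧
  (∀ a b : ℝ, q b - q a = ∫ t in a..b, q' t)

def lagJ {N : ℕ} (V : Euc N → ℝ) (c : ℝ) (q q' : ℝ → Euc N) (I : Set ℝ) : ℝ≥0∞ :=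
  ∫⁻ t in I, ENNReal.ofReal (2⁻¹ * ‖q' t‖ ^ 2 + (V (q t) - c))

def Gamma {N : ℕ} (V : Euc N → ℝ) (c : ℝ) (Vm Vp : Set (Euc N)) :
    Set ((ℝ → Euc N) × (ℝ → Euc N)) :=
  {p | IsH1loc p.1 p.2 ∧ (∀ t, c ≤ V (p.1 t)) ∧
    (∀ ε > 0, ∃ᶠ t in atBot, infDist (p.1 t) Vm < ε) ∧
    (∀ ε > 0, ∃ᶠ t in atTop, infDist (p.1 t) Vp < ε)}

def mc {N : ℕ} (V : Euc N → ℝ) (c : ℝ) (Vm Vp : Set (Euc N)) : ℝ≥0∞ :=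
  ⨅ (p) (_ : p ∈ Gamma V c Vm Vp), lagJ V c p.1 p.2 univ

def Coercive {N : ℕ} (V : Euc N → ℝ) (c : ℝ) (Vm Vp : Set (Euc N)) (R : ℝ) : Prop :=
  mc V c Vm Vp =
    ⨅ (p) (_ : p ∈ Gamma V c Vm Vp) (_ : ∀ t, ‖p.1 t‖ ≤ R), lagJ V c p.1 p.2 univ

/-- `ρ₀ := (1/4)·dist(𝒱⁻ ∩ B̄_R(0), 𝒱⁺ ∩ B̄_R(0))`. -/
def rho0 {N : ℕ} (Vm Vp : Set (Euc N)) (R : ℝ) : ℝ :=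
  (1 / 4) * setDist (Vm ∩ closedBall 0 R) (Vp ∩ closedBall 0 R)

/-- membership in `ℳ_c`. -/
def MemM {N : ℕ} (V : Euc N → ℝ) (c : ℝ) (Vm Vp : Set (Euc N)) (R : ℝ)
    (q q' : ℝ → Euc N) : Prop :=
  (q, q') ∈ Gamma V c Vm Vp ∧
  infDist (q 0) {x | V x ≤ c} = rho0 Vm Vp R ∧
  lagJ V c q q' univ = mc V c Vm Vp ∧
  (∀ t, ‖q t‖ ≤ R)

/-- `α_q` (valued in `[-∞,+∞]`, with `−∞` when `q(ℝ) ∩ 𝒱⁻ = ∅`). -/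
def alphaQ {N : ℕ} (Vm : Set (Euc N)) (q : ℝ → Euc N) : EReal :=
  sSup {x : EReal | ∃ t : ℝ, x = (t : EReal) ∧ q t ∈ Vm}

/-- `ω_q` (valued in `[-∞,+∞]`, with `+∞` when there is no `t > α_q` with `q(t) ∈ 𝒱⁺`). -/
def omegaQ {N : ℕ} (Vm Vp : Set (Euc N)) (q : ℝ → Euc N) : EReal :=
  sInf {x : EReal | ∃ t : ℝ, x = (t : EReal) ∧ alphaQ Vm q < (t : EReal) ∧ q t ∈ Vp}

/-- reflection of `q` with respect to `b` (used for `t > b`). -/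
def reflPlus {N : ℕ} (q : ℝ → Euc N) (b : ℝ) : ℝ → Euc N :=
  fun t => if t ≤ b then q t else q (2 * b - t)

/-- reflection of `q` with respect to `a` (used for `t < a`). -/
def reflMinus {N : ℕ} (q : ℝ → Euc N) (a : ℝ) : ℝ → Euc N :=
  fun t => if a ≤ t then q t else q (2 * a - t)

/-- ω-limit set `Ω_q := ⋂_{t > α_q} closure {q(s) : s ≥ t}`. -/
def omegaLimitSet {N : ℕ} (Vm : Set (Euc N)) (q : ℝ → Euc N) : Set (Euc N) :=
  ⋂ (t : ℝ) (_ : alphaQ Vm q < (t : EReal)), closure (q '' Ici t)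

/-- α-limit set `𝒜_q := ⋂_{t < ω_q} closure {q(s) : s ≤ t}`. -/
def alphaLimitSet {N : ℕ} (Vm Vp : Set (Euc N)) (q : ℝ → Euc N) : Set (Euc N) :=
  ⋂ (t : ℝ) (_ : (t : EReal) < omegaQ Vm Vp q), closure (q '' Iic t)


/-! ### Elementary crossing lemma -/

lemma crossing_up {f : ℝ → ℝ} (hf : Continuous f) {a b u v : ℝ} (hab : a ≤ b) (huv : u < v)
    (ha : f a ≤ u) (hb : v ≤ f b) :
    ∃ a' b', a ≤ a' ∧ a' ≤ b' ∧ b' ≤ b ∧ f a' = u ∧ f b' = v ∧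
      ∀ t ∈ Icc a' b', u ≤ f t ∧ f t ≤ v := by
  -- first time `b'` at which `f ≥ v`
  have hcB : IsCompact (Icc a b ∩ f ⁻¹' (Ici v)) :=
    isCompact_Icc.inter_right (isClosed_Ici.preimage hf)
  obtain ⟨b', ⟨⟨hab', hb'b⟩, hvb'⟩, hmin⟩ :=
    hcB.exists_isLeast ⟨b, ⟨hab, le_rfl⟩, hb⟩
  have hvb'' : v ≤ f b' := hvb'
  have hlt : ∀ t ∈ Icc a b', f t ≤ v := by
    intro t ht
    by_contra hcon
    push Not at hcon
    have hav : f a ≤ v := ha.trans huv.le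
    obtain ⟨s, hs, hsv⟩ := intermediate_value_Icc ht.1 hf.continuousOn ⟨hav, hcon.le⟩
    have h1 : b' ≤ s := hmin ⟨⟨hs.1, hs.2.trans (ht.2.trans hb'b)⟩, hsv.ge⟩
    have h2 : s = t := le_antisymm hs.2 (ht.2.trans h1)
    rw [h2] at hsv
    linarith
  have hfb' : f b' = v := le_antisymm (hlt b' ⟨hab', le_rfl⟩) hvb''
  have hcA : IsCompact (Icc a b' ∩ f ⁻¹' (Iic u)) :=
    isCompact_Icc.inter_right (isClosed_Iic.preimage hf)
  obtain ⟨a', ⟨⟨haa', ha'b'⟩, hua'⟩, hmax⟩ :=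
    hcA.exists_isGreatest ⟨a, ⟨le_rfl, hab'⟩, ha⟩
  have hua'' : f a' ≤ u := hua'
  have hgt : ∀ t ∈ Icc a' b', u ≤ f t := by
    intro t ht
    by_contra hcon
    push Not at hcon
    obtain ⟨s, hs, hsv⟩ := intermediate_value_Icc ht.2 hf.continuousOn
      (show u ∈ Icc (f t) (f b') from ⟨hcon.le, by linarith⟩)
    have h1 : s ≤ a' := hmax ⟨⟨haa'.trans (ht.1.trans hs.1), hs.2⟩, hsv.le⟩
    have h2 : s = t := le_antisymm (h1.trans ht.1) hs.1
    rw [h2] at hsv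
    linarith
  refine ⟨a', b', haa', ha'b', hb'b, le_antisymm hua'' (hgt a' ⟨le_rfl, ha'b'⟩), hfb', ?_⟩
  intro t ht
  exact ⟨hgt t ht, hlt t ⟨haa'.trans ht.1, ht.2⟩⟩

/-! ### Basic facts on the potential -/

lemma potential_gap {N : ℕ} {V : Euc N → ℝ} (hV : Continuous V) {c : ℝ} (R : ℝ)
    {r : ℝ} (hr : 0 < r) :
    ∃ μ > (0 : ℝ), ∀ x : Euc N, ‖x‖ ≤ R → r ≤ infDist x {x | V x ≤ c} → c + μ ≤ V x := by
  have hK : IsCompact (closedBall (0 : Euc N) R ∩ {x | r ≤ infDist x {x | V x ≤ c}}) :=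
    (isCompact_closedBall 0 R).inter_right
      (isClosed_le continuous_const (continuous_infDist_pt _))
  rcases (closedBall (0 : Euc N) R ∩ {x | r ≤ infDist x {x | V x ≤ c}}).eq_empty_or_nonempty
    with he | hne
  · refine ⟨1, one_pos, fun x hx hrx => ?_⟩
    have : x ∈ (∅ : Set (Euc N)) := he ▸ ⟨by simpa using hx, hrx⟩
    exact this.elim
  · obtain ⟨x0, hx0, hmin⟩ := hK.exists_isMinOn hne hV.continuousOn
    have hpos : c < V x0 := by
      by_contra hcon
      push Not at hcon
      have h0 : infDist x0 {x | V x ≤ c} = 0 := infDist_zero_of_mem hcon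
      have h1 : r ≤ infDist x0 {x | V x ≤ c} := hx0.2
      linarith
    refine ⟨V x0 - c, by linarith, fun x hx hrx => ?_⟩
    have : V x0 ≤ V x := hmin ⟨by simpa using hx, hrx⟩
    linarith

lemma h1_continuous {N : ℕ} {q q' : ℝ → Euc N} (h : IsH1loc q q') : Continuous q := by
  have h1 : q = fun b => q 0 + ∫ t in (0:ℝ)..b, q' t := by
    funext b
    rw [← h.2.2 0 b]; abel
  rw [h1]
  exact continuous_const.add (intervalIntegral.continuous_primitive
    (fun a b => (h.1.integrableOn_isCompact isCompact_uIcc).intervalIntegrable) 0)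

/-! ### Lower bound on the action -/

lemma action_lower {N : ℕ} {V : Euc N → ℝ} {c : ℝ} {q q' : ℝ → Euc N} (h : IsH1loc q q')
    {a b μ : ℝ} (hab : a ≤ b) (hμ : 0 < μ) (hVq : ∀ t ∈ Icc a b, c + μ ≤ V (q t)) :
    ENNReal.ofReal (Real.sqrt (2 * μ) * ‖q b - q a‖) ≤ lagJ V c q q' (Ioc a b) := by
  have h1 : ‖q b - q a‖ₑ ≤ ∫⁻ t in Ioc a b, ‖q' t‖ₑ := by
    rw [h.2.2 a b, intervalIntegral.integral_of_le hab]
    exact enorm_integral_le_lintegral_enorm _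
  rw [ENNReal.ofReal_mul (Real.sqrt_nonneg _), ofReal_norm]
  calc ENNReal.ofReal (Real.sqrt (2 * μ)) * ‖q b - q a‖ₑ
      ≤ ENNReal.ofReal (Real.sqrt (2 * μ)) * ∫⁻ t in Ioc a b, ‖q' t‖ₑ := by gcongr
    _ = ∫⁻ t in Ioc a b, ENNReal.ofReal (Real.sqrt (2 * μ)) * ‖q' t‖ₑ :=
        (lintegral_const_mul' _ _ ENNReal.ofReal_ne_top).symm
    _ ≤ lagJ V c q q' (Ioc a b) := by
        refine setLIntegral_mono' measurableSet_Ioc (fun t ht => ?_)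
        rw [← ofReal_norm, ← ENNReal.ofReal_mul (Real.sqrt_nonneg _)]
        apply ENNReal.ofReal_le_ofReal
        have h2 := hVq t ⟨ht.1.le, ht.2⟩
        have h3 : Real.sqrt (2 * μ) ^ 2 = 2 * μ := Real.sq_sqrt (by positivity)
        nlinarith [sq_nonneg (‖q' t‖ - Real.sqrt (2 * μ))]

lemma lagJ_mono {N : ℕ} {V : Euc N → ℝ} {c : ℝ} {q q' : ℝ → Euc N} {I K : Set ℝ} (h : I ⊆ K) :
    lagJ V c q q' I ≤ lagJ V c q q' K := lintegral_mono_set h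

lemma lagJ_add_le {N : ℕ} {V : Euc N → ℝ} {c : ℝ} {q q' : ℝ → Euc N} {I K : Set ℝ}
    (hK : MeasurableSet K) (h : Disjoint I K) :
    lagJ V c q q' I + lagJ V c q q' K ≤ lagJ V c q q' univ := by
  unfold lagJ
  rw [← lintegral_union hK h]
  exact lintegral_mono_set (subset_univ _)

/-- crossing the shell `d/8 ≤ dist(·, S) ≤ d/4` costs a definite amount of action -/
lemma crossing_cost {N : ℕ} {V : Euc N → ℝ} {c : ℝ} {S : Set (Euc N)}
    {R d μ : ℝ} (hd : 0 < d) (hμ : 0 < μ)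
    (hgap : ∀ x : Euc N, ‖x‖ ≤ R → d / 8 ≤ infDist x S → infDist x S ≤ d / 4 → c + μ ≤ V x)
    {q q' : ℝ → Euc N} (h : IsH1loc q q') (hqR : ∀ t, ‖q t‖ ≤ R) {a b : ℝ} (hab : a ≤ b)
    (ha : infDist (q a) S ≤ d / 8) (hb : d / 4 ≤ infDist (q b) S) :
    ENNReal.ofReal (Real.sqrt (2 * μ) * (d / 8)) ≤ lagJ V c q q' (Ioc a b) := by
  have hf : Continuous fun t => infDist (q t) S :=
    (continuous_infDist_pt S).comp (h1_continuous h)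
  obtain ⟨a', b', haa', hab', hbb', hfa, hfb, hall⟩ :=
    crossing_up hf hab (by linarith : d / 8 < d / 4) ha hb
  refine le_trans ?_ ((action_lower h hab' hμ (fun t ht =>
    hgap _ (hqR t) (hall t ht).1 (hall t ht).2)).trans
      (lagJ_mono (Ioc_subset_Ioc haa' hbb')))
  apply ENNReal.ofReal_le_ofReal
  gcongr
  have h1 := infDist_le_infDist_add_dist (s := S) (x := q b') (y := q a')
  rw [dist_eq_norm] at h1
  have h2 : infDist (q a') S = d / 8 := hfa
  have h3 : infDist (q b') S = d / 4 := hfb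
  linarith

/-! ### Short connections to the sublevel set -/

/-- first hitting of `{V ≤ c}` along a segment -/
lemma first_hit {N : ℕ} {V : Euc N → ℝ} (hV : Continuous V) {c : ℝ} {x y : Euc N}
    (hx : c ≤ V x) (hy : V y ≤ c) :
    ∃ T ∈ Icc (0 : ℝ) 1, V (x + T • (y - x)) = c ∧
      ∀ s ∈ Icc (0 : ℝ) T, c ≤ V (x + s • (y - x)) := by
  have hf : Continuous fun s : ℝ => V (x + s • (y - x)) := by fun_prop
  have hc : IsCompact (Icc (0 : ℝ) 1 ∩ (fun s : ℝ => V (x + s • (y - x))) ⁻¹' (Iic c)) :=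
    isCompact_Icc.inter_right (isClosed_Iic.preimage hf)
  obtain ⟨T, ⟨hT, hTc⟩, hmin⟩ := hc.exists_isLeast ⟨1, by simp, by simpa using hy⟩
  have hTc' : V (x + T • (y - x)) ≤ c := hTc
  have key : ∀ s ∈ Icc (0 : ℝ) T, c ≤ V (x + s • (y - x)) := by
    intro s hs
    by_contra hcon
    push Not at hcon
    obtain ⟨u, hu, huc⟩ := intermediate_value_Icc' hs.1 hf.continuousOn
      (show c ∈ Icc (V (x + s • (y - x))) (V (x + (0 : ℝ) • (y - x))) from
        ⟨hcon.le, by simpa using hx⟩)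
    have h1 : T ≤ u := hmin ⟨⟨hu.1, hu.2.trans (hs.2.trans hT.2)⟩, huc.le⟩
    have h2 : u = s := le_antisymm hu.2 (hs.2.trans h1)
    simp only [h2] at huc
    linarith
  exact ⟨T, hT, le_antisymm hTc' (key T ⟨hT.1, le_rfl⟩), key⟩

lemma short_connection {N : ℕ} {V : Euc N → ℝ} (hV : Continuous V) {c : ℝ}
    {S S' : Set (Euc N)} (hsplit : {x | V x ≤ c} = S ∪ S') (hS : S.Nonempty)
    {d : ℝ} (hd : 0 < d) (hsep : ∀ x ∈ S, ∀ y ∈ S', d ≤ dist x y) (R : ℝ)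
    {ε : ℝ} (hε : 0 < ε) :
    ∃ δ > (0 : ℝ), ∀ x : Euc N, ‖x‖ ≤ R → c ≤ V x → infDist x S < δ →
      ∃ z ∈ S, 2⁻¹ * ‖z - x‖ ^ 2 ≤ ε ∧
        ∀ s ∈ Icc (0 : ℝ) 1, c ≤ V (x + s • (z - x)) ∧ V (x + s • (z - x)) ≤ c + ε := by
  have huc : UniformContinuousOn V (closedBall (0 : Euc N) (R + 1)) :=
    (isCompact_closedBall 0 (R + 1)).uniformContinuousOn_of_continuous hV.continuousOn
  rw [Metric.uniformContinuousOn_iff] at huc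
  obtain ⟨δ₁, hδ₁, huc⟩ := huc ε hε
  refine ⟨min (min 1 d) (min δ₁ ε), by positivity, fun x hxR hxc hxS => ?_⟩
  obtain ⟨y, hyS, hxy⟩ := (infDist_lt_iff hS).1 hxS
  simp only [lt_min_iff] at hxy
  obtain ⟨⟨hxy1, hxyd⟩, hxyδ, hxyε⟩ := hxy
  have hyV : V y ≤ c := by
    have : y ∈ {x | V x ≤ c} := hsplit ▸ Or.inl hyS
    exact this
  obtain ⟨T, hT, hTc, hTs⟩ := first_hit hV hxc hyV
  have hn : ‖y - x‖ = dist x y := by rw [dist_comm, dist_eq_norm]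
  have hzx : x + T • (y - x) - x = T • (y - x) := by abel
  refine ⟨x + T • (y - x), ?_, ?_, ?_⟩
  · have hz : x + T • (y - x) ∈ S ∪ S' := hsplit ▸ hTc.le
    rcases hz with hz | hz
    · exact hz
    · exfalso
      have h1 := hsep y hyS _ hz
      have h2 : dist y (x + T • (y - x)) = (1 - T) * ‖y - x‖ := by
        rw [dist_eq_norm]
        have : y - (x + T • (y - x)) = (1 - T) • (y - x) := by
          rw [sub_smul, one_smul]; abel
        rw [this, norm_smul, Real.norm_of_nonneg (by linarith [hT.2])]
      have h3 : (1 - T) * ‖y - x‖ ≤ ‖y - x‖ := by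
        nlinarith [hT.1, norm_nonneg (y - x)]
      linarith
  · rw [hzx, norm_smul, Real.norm_of_nonneg hT.1]
    have h1 : T * ‖y - x‖ ≤ ‖y - x‖ := by nlinarith [hT.2, norm_nonneg (y - x)]
    have h2 : 0 ≤ T * ‖y - x‖ := mul_nonneg hT.1 (norm_nonneg _)
    nlinarith
  · intro s hs
    have he : x + s • (x + T • (y - x) - x) = x + (s * T) • (y - x) := by
      rw [hzx, smul_smul]
    rw [he]
    have hsT : s * T ∈ Icc (0 : ℝ) T :=
      ⟨mul_nonneg hs.1 hT.1, by nlinarith [hs.2, hT.1]⟩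
    refine ⟨hTs _ hsT, ?_⟩
    have hball : ∀ u ∈ Icc (0 : ℝ) 1, x + u • (y - x) ∈ closedBall (0 : Euc N) (R + 1) := by
      intro u hu
      rw [mem_closedBall_zero_iff]
      calc ‖x + u • (y - x)‖ ≤ ‖x‖ + ‖u • (y - x)‖ := norm_add_le _ _
        _ ≤ R + 1 := by
          rw [norm_smul, Real.norm_of_nonneg hu.1]
          nlinarith [hu.2, norm_nonneg (y - x)]
    have h1 := huc _ (hball (s * T) ⟨hsT.1, hsT.2.trans hT.2⟩) _ (hball T hT) (by
      rw [dist_eq_norm]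
      have : x + (s * T) • (y - x) - (x + T • (y - x)) = (s * T - T) • (y - x) := by
        rw [sub_smul]; abel
      rw [this, norm_smul, Real.norm_eq_abs, abs_of_nonpos (by linarith [hsT.2])]
      have : -(s * T - T) * ‖y - x‖ ≤ 1 * ‖y - x‖ := by
        gcongr
        linarith [hsT.1, hT.2]
      linarith)
    rw [Real.dist_eq, hTc] at h1
    linarith [(abs_lt.1 h1).2]

/-! ### Gluing -/

lemma glue {N : ℕ} {V : Euc N → ℝ} {c : ℝ} {Vm Vp : Set (Euc N)} {q q' : ℝ → Euc N}
    (h : IsH1loc q q') (hVq : ∀ t, c ≤ V (q t))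
    (hm : ∀ ε > 0, ∃ᶠ t in atBot, infDist (q t) Vm < ε) (τ : ℝ) {z : Euc N} (hz : z ∈ Vp)
    (hzc : V z ≤ c) {C : ℝ}
    (hseg : ∀ s ∈ Icc (0 : ℝ) 1, c ≤ V (q τ + s • (z - q τ)) ∧
      V (q τ + s • (z - q τ)) ≤ c + C) :
    mc V c Vm Vp ≤ lagJ V c q q' (Iic τ) + ENNReal.ofReal (2⁻¹ * ‖z - q τ‖ ^ 2 + C) := by
  set w := z - q τ with hw
  let p' : ℝ → Euc N := fun t => (Iic τ).indicator q' t + (Ioc τ (τ + 1)).indicator (fun _ => w) t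
  let p : ℝ → Euc N := fun t => q τ + ∫ s in τ..t, p' s
  have hp'loc : LocallyIntegrable p' volume :=
    (h.1.indicator measurableSet_Iic).add
      ((locallyIntegrable_const w).indicator measurableSet_Ioc)
  have hii : ∀ a b, IntervalIntegrable p' volume a b := fun a b =>
    (hp'loc.integrableOn_isCompact isCompact_uIcc).intervalIntegrable
  have e1 : ∀ t, t ≤ τ → p' t = q' t := by
    intro t ht
    simp [p', ht]
  have e2 : ∀ t ∈ Ioc τ (τ + 1), p' t = w := by
    intro t ht
    simp [p', ht.1, ht.2]
  have e3 : ∀ t, τ + 1 < t → p' t = 0 := by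
    intro t ht
    have : τ < t := by linarith
    simp [p', this, ht]
  have f1 : ∀ t, t ≤ τ → p t = q t := by
    intro t ht
    have h1 : ∫ s in τ..t, p' s = ∫ s in τ..t, q' s := by
      apply intervalIntegral.integral_congr_ae
      refine ae_of_all _ (fun s hs => ?_)
      rw [uIoc_of_ge ht] at hs
      exact e1 s hs.2
    show q τ + ∫ s in τ..t, p' s = q t
    rw [h1, ← h.2.2 τ t]; abel
  have f2 : ∀ t ∈ Icc τ (τ + 1), p t = q τ + (t - τ) • w := by
    intro t ht
    have h1 : ∫ s in τ..t, p' s = ∫ s in τ..t, w := by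
      apply intervalIntegral.integral_congr_ae
      refine ae_of_all _ (fun s hs => ?_)
      rw [uIoc_of_le ht.1] at hs
      exact e2 s ⟨hs.1, hs.2.trans ht.2⟩
    show q τ + ∫ s in τ..t, p' s = _
    rw [h1, intervalIntegral.integral_const]
  have f3 : ∀ t, τ + 1 ≤ t → p t = z := by
    intro t ht
    have h0 : ∫ s in (τ + 1)..t, p' s = 0 := by
      rw [intervalIntegral.integral_congr_ae (g := fun _ => (0 : Euc N))]
      · simp
      · refine ae_of_all _ (fun s hs => ?_)
        rw [uIoc_of_le ht] at hs
        exact e3 s hs.1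
    have h1 : p t = p (τ + 1) := by
      show q τ + ∫ s in τ..t, p' s = q τ + ∫ s in τ..(τ + 1), p' s
      rw [← intervalIntegral.integral_add_adjacent_intervals (hii τ (τ + 1)) (hii (τ + 1) t), h0,
        add_zero]
    rw [h1, f2 (τ + 1) ⟨by linarith, le_rfl⟩]
    simp [hw]
  have hH1 : IsH1loc p p' := by
    refine ⟨hp'loc, fun a b => ?_, fun a b => ?_⟩
    · have hsq : (fun t => ‖p' t‖ ^ 2) = fun t => (Iic τ).indicator (fun t => ‖q' t‖ ^ 2) t +
          (Ioc τ (τ + 1)).indicator (fun _ => ‖w‖ ^ 2) t := by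
        funext t
        rcases le_or_gt t τ with ht | ht
        · rw [e1 t ht]; simp [ht]
        · rcases le_or_gt t (τ + 1) with ht' | ht'
          · rw [e2 t ⟨ht, ht'⟩]; simp [ht, ht']
          · rw [e3 t ht']; simp [ht, ht']
      rw [hsq]
      refine Integrable.add ?_ ?_
      · exact (h.2.1 a b).indicator measurableSet_Iic
      · exact Integrable.indicator (integrableOn_const (by simp)) measurableSet_Ioc
    · show (q τ + ∫ s in τ..b, p' s) - (q τ + ∫ s in τ..a, p' s) = _
      rw [add_sub_add_left_eq_sub]
      exact intervalIntegral.integral_interval_sub_left (hii _ _) (hii _ _)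
  have hpz : c ≤ V z := by
    have := (hseg 1 (by simp)).1
    simpa [hw] using this
  have hG : (p, p') ∈ Gamma V c Vm Vp := by
    refine ⟨hH1, fun t => ?_, fun ε hε => ?_, fun ε hε => ?_⟩
    · show c ≤ V (p t)
      rcases le_or_gt t τ with ht | ht
      · rw [f1 t ht]; exact hVq t
      · rcases le_or_gt t (τ + 1) with ht' | ht'
        · rw [f2 t ⟨ht.le, ht'⟩]; exact (hseg (t - τ) ⟨by linarith, by linarith⟩).1
        · rw [f3 t ht'.le]; exact hpz
    · refine ((hm ε hε).and_eventually (eventually_le_atBot τ)).mono ?_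
      rintro t ⟨h1, h2⟩
      show infDist (p t) Vm < ε
      rw [f1 t h2]; exact h1
    · refine Eventually.frequently ?_
      filter_upwards [eventually_ge_atTop (τ + 1)] with t ht
      show infDist (p t) Vp < ε
      rw [f3 t ht, infDist_zero_of_mem hz]; exact hε
  refine (iInf₂_le (p, p') hG).trans ?_
  show lagJ V c p p' univ ≤ _
  have hun : (univ : Set ℝ) = Iic τ ∪ (Ioc τ (τ + 1) ∪ Ioi (τ + 1)) := by
    rw [Ioc_union_Ioi_eq_Ioi (by linarith), Iic_union_Ioi]
  have g1 : lagJ V c p p' (Iic τ) = lagJ V c q q' (Iic τ) := by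
    refine setLIntegral_congr_fun measurableSet_Iic (fun t ht => ?_)
    simp only [e1 t ht, f1 t ht]
  have g2 : lagJ V c p p' (Ioc τ (τ + 1)) ≤ ENNReal.ofReal (2⁻¹ * ‖w‖ ^ 2 + C) := by
    calc lagJ V c p p' (Ioc τ (τ + 1))
        ≤ ∫⁻ t in Ioc τ (τ + 1), ENNReal.ofReal (2⁻¹ * ‖w‖ ^ 2 + C) := by
          refine setLIntegral_mono' measurableSet_Ioc (fun t ht => ?_)
          apply ENNReal.ofReal_le_ofReal
          rw [e2 t ht, f2 t ⟨ht.1.le, ht.2⟩]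
          have := (hseg (t - τ) ⟨by linarith [ht.1], by linarith [ht.2]⟩).2
          linarith
      _ = _ := by simp
  have g3 : lagJ V c p p' (Ioi (τ + 1)) = 0 := by
    unfold lagJ
    rw [setLIntegral_congr_fun (g := fun _ => 0) measurableSet_Ioi]
    · simp
    · intro t ht
      simp only [e3 t ht, f3 t (le_of_lt ht)]
      simp [hzc]
  calc lagJ V c p p' univ
      ≤ lagJ V c p p' (Iic τ) + (lagJ V c p p' (Ioc τ (τ + 1)) + lagJ V c p p' (Ioi (τ + 1))) := by
        rw [hun]
        refine (lintegral_union_le _ _ _).trans ?_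
        gcongr
        · exact le_rfl
        · exact lintegral_union_le _ _ _
    _ ≤ _ := by
        rw [g1, g3, add_zero]
        gcongr

/-! ### Time reversal -/

lemma rev_h1 {N : ℕ} {q q' : ℝ → Euc N} (h : IsH1loc q q') :
    IsH1loc (fun t => q (-t)) (fun t => -q' (-t)) := by
  have hii : ∀ a b, IntervalIntegrable q' volume a b := fun a b =>
    (h.1.integrableOn_isCompact isCompact_uIcc).intervalIntegrable
  refine ⟨?_, fun a b => ?_, fun a b => ?_⟩
  · refine LocallyIntegrable.neg (f := fun t => q' (-t)) ?_
    rw [locallyIntegrable_iff]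
    intro K hK
    have h1 : IntegrableOn q' (-K) volume := h.1.integrableOn_isCompact hK.neg
    have := (Measure.measurePreserving_neg (volume : Measure ℝ)).integrableOn_comp_preimage
      (Homeomorph.neg ℝ).measurableEmbedding (f := q') (s := -K)
    have h2 := this.2 h1
    simpa [Function.comp_def] using h2
  · have h1 := h.2.1 (-b) (-a)
    have := (Measure.measurePreserving_neg (volume : Measure ℝ)).integrableOn_comp_preimage
      (Homeomorph.neg ℝ).measurableEmbedding (f := fun t => ‖q' t‖ ^ 2) (s := Icc (-b) (-a))
    have h2 := this.2 h1
    simpa [Function.comp_def] using h2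
  · show q (-b) - q (-a) = _
    rw [intervalIntegral.integral_neg, intervalIntegral.integral_comp_neg (fun t => q' t),
      h.2.2, intervalIntegral.integral_symm]

lemma rev_gamma {N : ℕ} {V : Euc N → ℝ} {c : ℝ} {Vm Vp : Set (Euc N)} {q q' : ℝ → Euc N}
    (h : (q, q') ∈ Gamma V c Vm Vp) :
    ((fun t => q (-t)), (fun t => -q' (-t))) ∈ Gamma V c Vp Vm := by
  obtain ⟨h1, h2, h3, h4⟩ := h
  refine ⟨rev_h1 h1, fun t => h2 (-t), fun ε hε => ?_, fun ε hε => ?_⟩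
  · exact (tendsto_neg_atTop_atBot.frequently (by simpa using h4 ε hε))
  · exact (tendsto_neg_atBot_atTop.frequently (by simpa using h3 ε hε))

lemma rev_lagJ {N : ℕ} {V : Euc N → ℝ} {c : ℝ} (q q' : ℝ → Euc N) (I : Set ℝ) :
    lagJ V c (fun t => q (-t)) (fun t => -q' (-t)) I = lagJ V c q q' (-I) := by
  unfold lagJ
  have := (Measure.measurePreserving_neg (volume : Measure ℝ)).setLIntegral_comp_preimage_emb
    (Homeomorph.neg ℝ).measurableEmbedding
    (fun t => ENNReal.ofReal (2⁻¹ * ‖q' t‖ ^ 2 + (V (q t) - c))) (-I)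
  simpa using this

lemma rev_mc {N : ℕ} (V : Euc N → ℝ) (c : ℝ) (Vm Vp : Set (Euc N)) :
    mc V c Vm Vp = mc V c Vp Vm := by
  have key : ∀ A B : Set (Euc N), mc V c A B ≤ mc V c B A := by
    intro A B
    refine le_iInf₂ (fun p hp => ?_)
    refine (iInf₂_le _ (rev_gamma (q := p.1) (q' := p.2) hp)).trans ?_
    rw [rev_lagJ]
    simp
  exact le_antisymm (key _ _) (key _ _)

lemma glue_left {N : ℕ} {V : Euc N → ℝ} {c : ℝ} {Vm Vp : Set (Euc N)} {q q' : ℝ → Euc N}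
    (h : (q, q') ∈ Gamma V c Vm Vp) (τ : ℝ) {z : Euc N} (hz : z ∈ Vm)
    (hzc : V z ≤ c) {C : ℝ}
    (hseg : ∀ s ∈ Icc (0 : ℝ) 1, c ≤ V (q τ + s • (z - q τ)) ∧
      V (q τ + s • (z - q τ)) ≤ c + C) :
    mc V c Vm Vp ≤ lagJ V c q q' (Ici τ) + ENNReal.ofReal (2⁻¹ * ‖z - q τ‖ ^ 2 + C) := by
  obtain ⟨h1, h2, h3, h4⟩ := rev_gamma h
  have key := glue (Vm := Vp) (Vp := Vm) h1 h2 h3 (-τ) hz hzc (C := C) (by simpa using hseg)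
  rw [rev_mc V c Vp Vm, rev_lagJ] at key
  simpa using key

/-! ### The one-sided concentration lemma -/

lemma shell_gap {N : ℕ} {V : Euc N → ℝ} {c : ℝ} {S S' : Set (Euc N)}
    (hsplit : {x | V x ≤ c} = S ∪ S') (hS : S.Nonempty)
    {d : ℝ} (hd : 0 < d) (hsep : ∀ x ∈ S, ∀ y ∈ S', d ≤ dist x y) {x : Euc N}
    (h1 : d / 8 ≤ infDist x S) (h2 : infDist x S ≤ d / 4) :
    d / 8 ≤ infDist x {x | V x ≤ c} := by
  rw [hsplit]
  refine (le_infDist (hS.mono subset_union_left)).2 ?_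
  rintro y (hy | hy)
  · exact h1.trans (infDist_le_dist_of_mem hy)
  · by_contra hcon
    push Not at hcon
    obtain ⟨w, hw, hxw⟩ := (infDist_lt_iff hS).1 (show infDist x S < d / 2 by linarith)
    have := hsep w hw y hy
    have h3 := dist_triangle w x y
    rw [dist_comm w x] at h3
    linarith

lemma one_sided {N : ℕ} {V : Euc N → ℝ} (hV : Continuous V) {c : ℝ} {Vm Vp : Set (Euc N)}
    (hsplit : {x | V x ≤ c} = Vm ∪ Vp) (hVm : Vm.Nonempty) (hVp : Vp.Nonempty)
    {d : ℝ} (hd : 0 < d) (hsep : ∀ x ∈ Vm, ∀ y ∈ Vp, d ≤ dist x y) (R : ℝ)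
    (hmc : mc V c Vm Vp ≠ ⊤) :
    ∃ rbar > (0 : ℝ), ∀ r : ℝ, 0 < r → r < rbar → ∃ L > (0 : ℝ), ∃ ν > (0 : ℝ),
      ∀ q q' : ℝ → Euc N, (q, q') ∈ Gamma V c Vm Vp →
        d / 4 ≤ infDist (q 0) {x | V x ≤ c} → (∀ t, ‖q t‖ ≤ R) →
        lagJ V c q q' univ ≤ mc V c Vm Vp + ENNReal.ofReal ν →
        ∃ τ ∈ Ioo (0 : ℝ) L, infDist (q τ) Vp ≤ r ∧ ∀ t, τ ≤ t → infDist (q t) Vp < d / 4 := by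
  have hsplit' : {x | V x ≤ c} = Vp ∪ Vm := by rw [hsplit, union_comm]
  have hsep' : ∀ x ∈ Vp, ∀ y ∈ Vm, d ≤ dist x y := fun x hx y hy => by
    rw [dist_comm]; exact hsep y hy x hx
  obtain ⟨μ, hμ, hgap⟩ := potential_gap hV (c := c) R (show 0 < d / 8 by positivity)
  set κ := Real.sqrt (2 * μ) * (d / 8) with hκ
  have hκ0 : 0 < κ := by positivity
  obtain ⟨δm, hδm, hm⟩ := short_connection hV hsplit hVm hd hsep R (show 0 < κ / 8 by positivity)
  obtain ⟨δp, hδp, hp⟩ := short_connection hV hsplit' hVp hd hsep' R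
    (show 0 < κ / 8 by positivity)
  refine ⟨min (d / 8) (min δm δp), by positivity, fun r hr hrb => ?_⟩
  simp only [lt_min_iff] at hrb
  obtain ⟨hrd, hrm, hrp⟩ := hrb
  obtain ⟨μr, hμr, hgapr⟩ := potential_gap hV (c := c) R hr
  set M := (mc V c Vm Vp).toReal with hM
  have hM0 : 0 ≤ M := ENNReal.toReal_nonneg
  have hMe : mc V c Vm Vp = ENNReal.ofReal M := (ENNReal.ofReal_toReal hmc).symm
  refine ⟨(M + κ) / μr, by positivity, κ / 4, by positivity, fun q q' hq hq0 hqR hJ => ?_⟩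
  obtain ⟨hH, hVq, hqm, hqp⟩ := id hq
  simp only at hH hVq hqm hqp
  -- contradiction scheme
  have contra : ∀ I K : Set ℝ, MeasurableSet K → Disjoint I K →
      ENNReal.ofReal κ ≤ lagJ V c q q' I →
      ∀ C : ℝ, C ≤ κ / 4 → mc V c Vm Vp ≤ lagJ V c q q' K + ENNReal.ofReal C → False := by
    intro I K hK hIK h1 C hC h2
    have h3 := lagJ_add_le (V := V) (c := c) (q := q) (q' := q') hK hIK
    have h4 : mc V c Vm Vp + ENNReal.ofReal κ ≤
        mc V c Vm Vp + ENNReal.ofReal (κ / 4) + ENNReal.ofReal (κ / 4) := by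
      calc mc V c Vm Vp + ENNReal.ofReal κ
          ≤ (lagJ V c q q' K + ENNReal.ofReal C) + lagJ V c q q' I := add_le_add h2 h1
        _ = (lagJ V c q q' I + lagJ V c q q' K) + ENNReal.ofReal C := by ring
        _ ≤ (mc V c Vm Vp + ENNReal.ofReal (κ / 4)) + ENNReal.ofReal (κ / 4) :=
          add_le_add (h3.trans hJ) (ENNReal.ofReal_le_ofReal hC)
    rw [hMe, ← ENNReal.ofReal_add hM0 (by positivity), ← ENNReal.ofReal_add hM0 (by positivity),
      ← ENNReal.ofReal_add (by positivity) (by positivity),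
      ENNReal.ofReal_le_ofReal_iff (by positivity)] at h4
    linarith
  -- there is a time in `(0, L)` close to the sublevel set
  obtain ⟨τ, hτ, hτr⟩ : ∃ τ ∈ Ioo (0 : ℝ) ((M + κ) / μr), infDist (q τ) {x | V x ≤ c} < r := by
    by_contra hcon
    push Not at hcon
    have h1 : ENNReal.ofReal (M + κ) ≤ lagJ V c q q' univ := by
      calc ENNReal.ofReal (M + κ)
          = ∫⁻ t in Ioo (0 : ℝ) ((M + κ) / μr), ENNReal.ofReal μr := by
            rw [lintegral_const, Measure.restrict_apply_univ, Real.volume_Ioo, sub_zero,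
              ← ENNReal.ofReal_mul hμr.le]
            congr 1
            field_simp
        _ ≤ lagJ V c q q' (Ioo (0 : ℝ) ((M + κ) / μr)) := by
            refine setLIntegral_mono' measurableSet_Ioo (fun t ht => ?_)
            apply ENNReal.ofReal_le_ofReal
            have := hgapr (q t) (hqR t) (hcon t ht)
            nlinarith [sq_nonneg ‖q' t‖]
        _ ≤ _ := lagJ_mono (subset_univ _)
    have h2 := h1.trans hJ
    rw [hMe, ← ENNReal.ofReal_add hM0 (by positivity),
      ENNReal.ofReal_le_ofReal_iff (by positivity)] at h2
    linarith
  rw [hsplit, infDist_lt_iff (hVm.mono subset_union_left)] at hτr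
  obtain ⟨y, hy, hτy⟩ := hτr
  rcases hy with hy | hy
  · -- close to `Vm`: impossible
    exfalso
    have hlt : infDist (q τ) Vm < r := (infDist_le_dist_of_mem hy).trans_lt hτy
    obtain ⟨z, hz, hz1, hz2⟩ := hm (q τ) (hqR τ) (hVq τ) (hlt.trans hrm)
    have hzc : V z ≤ c := by
      have : z ∈ {x | V x ≤ c} := hsplit ▸ Or.inl hz
      exact this
    have hg := glue_left hq τ hz hzc hz2
    obtain ⟨a, ha, ha0⟩ := ((hqm (d / 8) (by positivity)).and_eventually
      (eventually_le_atBot 0)).exists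
    have h0 : d / 4 ≤ infDist (q 0) Vm := by
      refine hq0.trans ?_
      rw [hsplit]
      exact infDist_le_infDist_of_subset subset_union_left hVm
    have hcr := crossing_cost (V := V) (c := c) hd hμ (fun x hx h1 h2 =>
      hgap x hx (shell_gap hsplit hVm hd hsep h1 h2)) hH hqR ha0 ha.le h0
    refine contra (Ioc a 0) (Ici τ) measurableSet_Ici ?_ hcr _ ?_ hg
    · rw [Set.disjoint_left]
      intro t ht ht'
      exact absurd (ht.2.trans_lt hτ.1) (not_lt.2 ht')
    · linarith
  · have hlt : infDist (q τ) Vp < r := (infDist_le_dist_of_mem hy).trans_lt hτy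
    refine ⟨τ, hτ, hlt.le, fun t ht => ?_⟩
    by_contra hcon
    push Not at hcon
    obtain ⟨z, hz, hz1, hz2⟩ := hp (q τ) (hqR τ) (hVq τ) (hlt.trans hrp)
    have hzc : V z ≤ c := by
      have : z ∈ {x | V x ≤ c} := hsplit ▸ Or.inr hz
      exact this
    have hg := glue hH hVq hqm τ hz hzc hz2
    have hcr := crossing_cost (V := V) (c := c) hd hμ (fun x hx h1 h2 =>
      hgap x hx (shell_gap hsplit' hVp hd hsep' h1 h2)) hH hqR ht (hlt.trans hrd).le hcon
    refine contra (Ioc τ t) (Iic τ) measurableSet_Iic ?_ hcr _ ?_ hg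
    · rw [Set.disjoint_left]
      intro s hs hs'
      exact absurd hs.1 (not_lt.2 hs')
    · linarith

/-! ### Finiteness of `mc` -/

lemma mc_finite {N : ℕ} {V : Euc N → ℝ} (hV : Continuous V) {c : ℝ} {Vm Vp : Set (Euc N)}
    (hcm : IsClosed Vm) (hcp : IsClosed Vp)
    (hsplit : {x | V x ≤ c} = Vm ∪ Vp) (hVm : Vm.Nonempty) (hVp : Vp.Nonempty)
    {d : ℝ} (hd : 0 < d) (hsep : ∀ x ∈ Vm, ∀ y ∈ Vp, d ≤ dist x y) :
    mc V c Vm Vp ≠ ⊤ := by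
  obtain ⟨x, hx⟩ := hVm
  obtain ⟨y, hy⟩ := hVp
  let g : ℝ → Euc N := fun s => x + s • (y - x)
  have hg : Continuous g := by fun_prop
  have hcA : IsCompact (Icc (0 : ℝ) 1 ∩ g ⁻¹' Vm) :=
    isCompact_Icc.inter_right (hcm.preimage hg)
  obtain ⟨a, ⟨ha, haV⟩, hmax⟩ := hcA.exists_isGreatest ⟨0, by simp, by simpa [g] using hx⟩
  have hcB : IsCompact (Icc a 1 ∩ g ⁻¹' Vp) :=
    isCompact_Icc.inter_right (hcp.preimage hg)
  obtain ⟨b, ⟨hb, hbV⟩, hmin⟩ := hcB.exists_isLeast ⟨1, ⟨ha.2, le_rfl⟩, by simpa [g] using hy⟩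
  have hab : a < b := by
    rcases hb.1.lt_or_eq with h | h
    · exact h
    · have h1 := hsep _ haV _ hbV
      rw [h, dist_self] at h1
      linarith
  have hpos : ∀ s ∈ Ioo a b, c ≤ V (g s) := by
    intro s hs
    by_contra hcon
    push Not at hcon
    have hmem : g s ∈ Vm ∪ Vp := hsplit ▸ hcon.le
    rcases hmem with h | h
    · have := hmax ⟨⟨ha.1.trans hs.1.le, hs.2.le.trans hb.2⟩, h⟩
      linarith [hs.1]
    · have := hmin ⟨⟨hs.1.le, hs.2.le.trans hb.2⟩, h⟩
      linarith [hs.2]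
  have hpos' : ∀ s ∈ Icc a b, c ≤ V (g s) := by
    intro s hs
    rw [← closure_Ioo hab.ne] at hs
    have hcl : IsClosed {s | c ≤ V (g s)} := isClosed_le continuous_const (hV.comp hg)
    exact closure_minimal (s := Ioo a b) (fun s hs => hpos s hs) hcl hs
  obtain ⟨C, hC⟩ := (isCompact_Icc (a := a) (b := b)).bddAbove_image (hV.comp hg).continuousOn
  have hVle : ∀ w ∈ Vm ∪ Vp, V w ≤ c := fun w hw => by
    have : w ∈ {x | V x ≤ c} := hsplit ▸ hw
    exact this
  have hH : IsH1loc (fun _ : ℝ => g a) (fun _ => 0) := by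
    refine ⟨locallyIntegrable_const _, fun _ _ => by simp, fun _ _ => by simp⟩
  have key := glue (V := V) (c := c) (Vm := Vm) (Vp := Vp) hH
    (fun _ => hpos' a ⟨le_rfl, hab.le⟩)
    (fun ε hε => (Eventually.of_forall fun t => by
      rw [infDist_zero_of_mem (show g a ∈ Vm from haV)]; exact hε).frequently) 0
    (show g b ∈ Vp from hbV) (hVle (g b) (Or.inr hbV))
    (C := C - c) (by
      intro s hs
      have he : g a + s • (g b - g a) = g (a + s * (b - a)) := by
        simp only [g]
        module
      have hm : a + s * (b - a) ∈ Icc a b :=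
        ⟨by nlinarith [hs.1], by nlinarith [hs.2]⟩
      simp only [he]
      refine ⟨hpos' _ hm, ?_⟩
      have := hC (mem_image_of_mem _ hm)
      simp only [Function.comp] at this
      linarith)
  refine ne_top_of_le_ne_top ?_ key
  have h0 : lagJ V c (fun _ : ℝ => g a) (fun _ => 0) (Iic 0) = 0 := by
    unfold lagJ
    have : V (g a) - c ≤ 0 := by linarith [hVle (g a) (Or.inl haV)]
    simp [ENNReal.ofReal_of_nonpos this]
  rw [h0, zero_add]
  exact ENNReal.ofReal_ne_top

lemma meets_ball {N : ℕ} {S : Set (Euc N)} (hS : IsClosed S) (hne : S.Nonempty) {R : ℝ}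
    (hR : 0 < R) (h : ∀ ε > 0, ∃ x : Euc N, ‖x‖ ≤ R ∧ infDist x S < ε) :
    (S ∩ closedBall 0 R).Nonempty := by
  obtain ⟨x0, hx0, hmin⟩ := (isCompact_closedBall (0 : Euc N) R).exists_isMinOn
    ⟨0, by simp [hR.le]⟩ (continuous_infDist_pt S).continuousOn
  refine ⟨x0, ?_, hx0⟩
  rw [hS.mem_iff_infDist_zero hne]
  refine le_antisymm ?_ infDist_nonneg
  by_contra hcon
  push Not at hcon
  obtain ⟨x, hx, hlt⟩ := h _ hcon
  have : infDist x0 S ≤ infDist x S := hmin (by simpa using hx)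
  linarith

/-- Lemma 2.3 (concentration): low-action admissible trajectories concentrate near the
sublevel sets, with quantitative estimates. -/
theorem concentration {N : ℕ} (hN : 0 < N) (V : Euc N → ℝ) (hV : ContDiff ℝ 1 V)
    (c : ℝ) (Vm Vp : Set (Euc N)) (hVm : IsClosed Vm) (hVp : IsClosed Vp)
    (hsplit : {x | V x ≤ c} = Vm ∪ Vp) (hsep : 0 < setDist Vm Vp)
    (R : ℝ) (hR : 0 < R) (hcoer : Coercive V c Vm Vp R) :
    ∃ rbar : ℝ, 0 < rbar ∧ rbar < rho0 Vm Vp R / 2 ∧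
      ∀ r : ℝ, 0 < r → r < rbar →
        ∃ L > (0 : ℝ), ∃ ν > (0 : ℝ),
          ∀ q q' : ℝ → Euc N, (q, q') ∈ Gamma V c Vm Vp →
            rho0 Vm Vp R ≤ infDist (q 0) {x | V x ≤ c} →
            (∀ t, ‖q t‖ ≤ R) →
            lagJ V c q q' univ ≤ mc V c Vm Vp + ENNReal.ofReal ν →
            ((∃ τ ∈ Ioo (0 : ℝ) L, infDist (q τ) Vp ≤ r ∧
                ∀ t, τ ≤ t → infDist (q t) Vp < rho0 Vm Vp R) ∧
             (∃ σ ∈ Ioo (-L) (0 : ℝ), infDist (q σ) Vm ≤ r ∧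
                ∀ t, t ≤ σ → infDist (q t) Vm < rho0 Vm Vp R)) := by
  have hVc := hV.continuous
  set d := setDist Vm Vp with hdd
  have hbdd : ∀ A B : Set (Euc N), BddBelow ((fun p : Euc N × Euc N => dist p.1 p.2) '' (A ×ˢ B)) := by
    intro A B
    refine ⟨0, ?_⟩
    rintro _ ⟨p, -, rfl⟩
    exact dist_nonneg
  have hne : (Vm ×ˢ Vp).Nonempty := by
    by_contra hcon
    rw [not_nonempty_iff_eq_empty] at hcon
    rw [hdd, setDist, hcon, image_empty, Real.sInf_empty] at hsep
    exact lt_irrefl _ hsep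
  have hnm : Vm.Nonempty := hne.fst
  have hnp : Vp.Nonempty := hne.snd
  have hsep1 : ∀ x ∈ Vm, ∀ y ∈ Vp, d ≤ dist x y := fun x hx y hy =>
    csInf_le (hbdd _ _) ⟨(x, y), ⟨hx, hy⟩, rfl⟩
  have hsep2 : ∀ x ∈ Vp, ∀ y ∈ Vm, d ≤ dist x y := fun x hx y hy => by
    rw [dist_comm]; exact hsep1 y hy x hx
  have hmc := mc_finite hVc hVm hVp hsplit hnm hnp hsep hsep1
  have hmc' : mc V c Vp Vm ≠ ⊤ := by rw [rev_mc]; exact hmc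
  -- `ρ₀ ≥ d / 4`
  have hrho : d / 4 ≤ rho0 Vm Vp R := by
    obtain ⟨p, hpG, hpR⟩ : ∃ p ∈ Gamma V c Vm Vp, ∀ t, ‖p.1 t‖ ≤ R := by
      by_contra hcon
      push Not at hcon
      apply hmc
      rw [hcoer]
      refine iInf_eq_top.2 fun p => iInf_eq_top.2 fun hp => iInf_eq_top.2 fun hpR => ?_
      obtain ⟨t, ht⟩ := hcon p hp
      exact absurd (hpR t) (not_le.2 ht)
    obtain ⟨-, -, h3, h4⟩ := hpG
    have hm := meets_ball hVm hnm hR fun ε hε => by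
      obtain ⟨t, ht⟩ := (h3 ε hε).exists
      exact ⟨_, hpR t, ht⟩
    have hp := meets_ball hVp hnp hR fun ε hε => by
      obtain ⟨t, ht⟩ := (h4 ε hε).exists
      exact ⟨_, hpR t, ht⟩
    have : d ≤ setDist (Vm ∩ closedBall 0 R) (Vp ∩ closedBall 0 R) := by
      refine le_csInf ((hm.prod hp).image _) ?_
      rintro _ ⟨p, ⟨hp1, hp2⟩, rfl⟩
      exact hsep1 _ hp1.1 _ hp2.1
    unfold rho0
    linarith
  have hsplit' : {x | V x ≤ c} = Vp ∪ Vm := by rw [hsplit, union_comm]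
  obtain ⟨r1, hr1, H1⟩ := one_sided hVc hsplit hnm hnp hsep hsep1 R hmc
  obtain ⟨r2, hr2, H2⟩ := one_sided hVc hsplit' hnp hnm hsep hsep2 R hmc'
  refine ⟨min (d / 16) (min r1 r2), by positivity, ?_, fun r hr hrb => ?_⟩
  · have := min_le_left (d / 16) (min r1 r2)
    linarith
  simp only [lt_min_iff] at hrb
  obtain ⟨-, hb1, hb2⟩ := hrb
  obtain ⟨L1, hL1, ν1, hν1, K1⟩ := H1 r hr hb1
  obtain ⟨L2, hL2, ν2, hν2, K2⟩ := H2 r hr hb2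
  refine ⟨max L1 L2, by positivity, min ν1 ν2, by positivity, fun q q' hq hq0 hqR hJ => ?_⟩
  constructor
  · obtain ⟨τ, hτ, hτr, hall⟩ := K1 q q' hq (hrho.trans hq0) hqR (hJ.trans (by
      gcongr; exact min_le_left _ _))
    exact ⟨τ, ⟨hτ.1, hτ.2.trans_le (le_max_left _ _)⟩, hτr, fun t ht =>
      (hall t ht).trans_le hrho⟩
  · obtain ⟨τ, hτ, hτr, hall⟩ := K2 _ _ (rev_gamma hq) (by simpa using hrho.trans hq0)
      (fun t => hqR (-t)) (by
        rw [rev_lagJ, rev_mc V c Vp Vm, neg_univ]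
        refine hJ.trans ?_
        gcongr; exact min_le_right _ _)
    refine ⟨-τ, ⟨?_, by linarith [hτ.1]⟩, hτr, fun t ht => ?_⟩
    · have := hτ.2.trans_le (le_max_right L1 L2)
      linarith
    · have := hall (-t) (by linarith)
      simp only [neg_neg] at this
      exact this.trans_le hrho
end
end

section
/- Assume V ∈ C¹(ℝ^N), c ∈ ℝ, condition (V^c) and the coercivity condition (1.7). If q ∈ ℳ_c, then q is twice continuously differentiable on the open interval (α_q, ω_q) and q̈(t) = ∇V(q(t)) for all t ∈ (α_q, ω_q). -/
open MeasureTheory Filter Metric Set Topology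
open scoped ENNReal

noncomputable section

namespace IsH1loc
variable {N : ℕ} {q q' p p' : ℝ → Euc N}

theorem ii (h : IsH1loc q q') (a b : ℝ) : IntervalIntegrable q' volume a b :=
  (h.1.integrableOn_isCompact isCompact_uIcc).intervalIntegrable

theorem cont (h : IsH1loc q q') : Continuous q := by
  have : q = fun t => q 0 + ∫ s in (0:ℝ)..t, q' s := by
    funext t; rw [← h.2.2]; abel
  rw [this]
  exact continuous_const.add (intervalIntegral.continuous_primitive (fun a b => h.ii a b) 0)

theorem add (h : IsH1loc q q') (k : IsH1loc p p') :
    IsH1loc (fun t => q t + p t) (fun t => q' t + p' t) := by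
  refine ⟨h.1.add k.1, fun a b => ?_, fun a b => ?_⟩
  · refine (((h.2.1 a b).const_mul 2).add ((k.2.1 a b).const_mul 2)).mono' ?_ ?_
    · exact ((h.1.add k.1).integrableOn_isCompact isCompact_Icc).aestronglyMeasurable.norm.pow 2
    · refine Eventually.of_forall fun t => ?_
      simp only [Pi.add_apply]
      rw [Real.norm_of_nonneg (by positivity)]
      have := norm_add_le (q' t) (p' t)
      nlinarith [sq_nonneg (‖q' t‖ - ‖p' t‖), norm_nonneg (q' t + p' t)]
  · rw [intervalIntegral.integral_add (h.ii a b) (k.ii a b), ← h.2.2, ← k.2.2, add_sub_add_comm]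

theorem smul (h : IsH1loc q q') (s : ℝ) :
    IsH1loc (fun t => s • q t) (fun t => s • q' t) := by
  refine ⟨h.1.smul s, fun a b => ?_, fun a b => ?_⟩
  · simp only [norm_smul, mul_pow]
    exact (h.2.1 a b).const_mul _
  · rw [intervalIntegral.integral_smul, ← h.2.2, smul_sub]

theorem linear (v w : Euc N) : IsH1loc (fun t => t • v + w) (fun _ => v) := by
  refine ⟨locallyIntegrable_const _, fun a b => ?_, fun a b => ?_⟩
  · exact (continuous_const.integrableOn_Icc)
  · simp [sub_smul]

theorem clamp (h : IsH1loc q q') {a b : ℝ} (hab : a ≤ b) :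
    IsH1loc (fun t => q (max a (min b t))) ((Ioc a b).indicator q') := by
  have hL : LocallyIntegrable ((Ioc a b).indicator q') volume := h.1.indicator measurableSet_Ioc
  have hii : ∀ x y, IntervalIntegrable ((Ioc a b).indicator q') volume x y := fun x y =>
    (hL.integrableOn_isCompact isCompact_uIcc).intervalIntegrable
  refine ⟨hL, fun x y => ?_, ?_⟩
  · have : (fun t => ‖(Ioc a b).indicator q' t‖ ^ 2) = (Ioc a b).indicator (fun t => ‖q' t‖ ^ 2) := by
      funext t; by_cases ht : t ∈ Ioc a b <;> simp [ht]
    rw [this]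
    exact (h.2.1 x y).indicator measurableSet_Ioc
  · have h0 : ∀ x y, (∀ t ∈ uIoc x y, t ∉ Ioc a b) → ∫ t in x..y, (Ioc a b).indicator q' t = 0 := by
      intro x y hxy
      apply intervalIntegral.integral_zero_ae
      exact Eventually.of_forall fun t ht => indicator_of_notMem (hxy t ht) _
    have h1 : ∀ t, a ≤ t → t ≤ b → ∫ t in a..t, (Ioc a b).indicator q' t = q t - q a := by
      intro t h1 h2
      rw [h.2.2]
      apply intervalIntegral.integral_congr_ae
      refine Eventually.of_forall fun s hs => indicator_of_mem ?_ _
      rw [uIoc_of_le h1] at hs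
      exact ⟨hs.1, hs.2.trans h2⟩
    have key : ∀ t, ∫ t in a..t, (Ioc a b).indicator q' t = q (max a (min b t)) - q a := by
      intro t
      rcases le_total t a with hta | hta
      · rw [h0, max_eq_left ((min_le_right _ _).trans hta), sub_self]
        intro s hs
        rw [uIoc_of_ge hta] at hs
        exact fun hh => absurd hs.2 (not_le.2 hh.1)
      rcases le_total t b with htb | htb
      · rw [h1 t hta htb, min_eq_right htb, max_eq_right hta]
      · rw [← intervalIntegral.integral_add_adjacent_intervals (hii a b) (hii b t), h1 b hab le_rfl,
          h0, min_eq_left htb, max_eq_right hab, add_zero]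
        intro s hs
        rw [uIoc_of_le htb] at hs
        exact fun hh => absurd hh.2 (not_le.2 hs.1)
    intro x y
    rw [← intervalIntegral.integral_interval_sub_left (hii a y) (hii a x), key, key]; abel

end IsH1loc

theorem setDist_le {N : ℕ} {A B : Set (Euc N)} {x y : Euc N} (hx : x ∈ A) (hy : y ∈ B) :
    setDist A B ≤ dist x y := by
  apply csInf_le
  · refine ⟨0, ?_⟩
    rintro _ ⟨p, -, rfl⟩
    exact dist_nonneg
  · exact ⟨(x, y), ⟨hx, hy⟩, rfl⟩

/-- from a point near `A`, one can reach a point of `A` along a segment on which `c ≤ V`. -/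
theorem reach {N : ℕ} {V : Euc N → ℝ} (hV : Continuous V) {c : ℝ} {A B : Set (Euc N)}
    (hsplit : {x | V x ≤ c} = A ∪ B) (hne : A.Nonempty)
    {δ : ℝ} (hdist : ∀ x ∈ A, ∀ y ∈ B, δ ≤ dist x y) {z : Euc N}
    (hz : c ≤ V z) (hzd : infDist z A < δ) :
    ∃ v : Euc N, z + v ∈ A ∧ V (z + v) = c ∧ ∀ s ∈ Icc (0:ℝ) 1, c ≤ V (z + s • v) := by
  obtain ⟨x, hx, hxz⟩ := (infDist_lt_iff hne).1 hzd
  let g : ℝ → ℝ := fun s => V (z + s • (x - z))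
  have hg : Continuous g := by fun_prop
  let S : Set ℝ := Icc 0 1 ∩ {s | g s ≤ c}
  have hS : IsCompact S := isCompact_Icc.inter_right (isClosed_le hg continuous_const)
  have h1 : (1:ℝ) ∈ S := by
    refine ⟨by simp, ?_⟩
    have : x ∈ {x | V x ≤ c} := by rw [hsplit]; exact Or.inl hx
    simpa [g] using this
  obtain ⟨s0, hs0, hmin⟩ := hS.exists_isLeast ⟨1, h1⟩
  have hlt : ∀ s, 0 ≤ s → s < s0 → c < g s := by
    intro s hs hss
    by_contra hcon
    exact absurd (hmin ⟨⟨hs, hss.le.trans hs0.1.2⟩, not_lt.1 hcon⟩) (not_le.2 hss)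
  have hge : c ≤ g s0 := by
    rcases hs0.1.1.eq_or_lt with h | h
    · rw [← h]; simpa [g] using hz
    · have : s0 ∈ closure (Ioo 0 s0) := by rw [closure_Ioo h.ne]; exact ⟨h.le, le_rfl⟩
      have hcl : IsClosed {s | c ≤ g s} := isClosed_le continuous_const hg
      exact hcl.closure_subset_iff.2 (fun s hs => (hlt s hs.1.le hs.2).le) this
  have heq : g s0 = c := le_antisymm hs0.2 hge
  refine ⟨s0 • (x - z), ?_, heq, ?_⟩
  · have hm : z + s0 • (x - z) ∈ A ∪ B := by rw [← hsplit]; exact heq.le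
    rcases hm with h | h
    · exact h
    · exfalso
      have := hdist x hx _ h
      have h2 : dist x (z + s0 • (x - z)) ≤ dist z x := by
        rw [dist_eq_norm, dist_comm, dist_eq_norm]
        have : x - (z + s0 • (x - z)) = (1 - s0) • (x - z) := by
          rw [sub_smul, one_smul]; abel
        rw [this, norm_smul, Real.norm_of_nonneg (by linarith [hs0.1.2])]
        nlinarith [hs0.1.1, norm_nonneg (x - z)]
      linarith
  · intro s hs
    rw [smul_smul]
    rcases hs.2.eq_or_lt with h | h
    · rw [h, one_mul]; exact hge
    · rcases hs0.1.1.eq_or_lt with h' | h'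
      · rw [← h']; simpa using hz
      · exact (hlt (s * s0) (mul_nonneg hs.1 h'.le) (by nlinarith)).le

theorem lagr_integrable {N : ℕ} {V : Euc N → ℝ} (hV : Continuous V) (c : ℝ) {q q' : ℝ → Euc N}
    (h : IsH1loc q q') (a b : ℝ) :
    IntegrableOn (fun t => 2⁻¹ * ‖q' t‖ ^ 2 + (V (q t) - c)) (Ioc a b) volume := by
  have h1 : IntegrableOn (fun t => V (q t) - c) (Icc a b) volume :=
    ((hV.comp h.cont).sub continuous_const).integrableOn_Icc
  exact IntegrableOn.mono_set (Integrable.add ((h.2.1 a b).const_mul 2⁻¹) h1) Ioc_subset_Icc_self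

theorem mc_lt_top {N : ℕ} {V : Euc N → ℝ} (hV : Continuous V) {c : ℝ} {Vm Vp : Set (Euc N)}
    (hsplit : {x | V x ≤ c} = Vm ∪ Vp) (hsep : 0 < setDist Vm Vp) {q q' : ℝ → Euc N}
    (hq : (q, q') ∈ Gamma V c Vm Vp) : mc V c Vm Vp < ⊤ := by
  obtain ⟨hH, hge, hm, hp⟩ := hq
  simp only at hH hge hm hp
  have hnm : Vm.Nonempty := by
    by_contra h
    rw [not_nonempty_iff_eq_empty] at h
    simp [setDist, h] at hsep
  have hnp : Vp.Nonempty := by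
    by_contra h
    rw [not_nonempty_iff_eq_empty] at h
    simp [setDist, h] at hsep
  obtain ⟨t1, ht1, ht1'⟩ := ((hm _ hsep).and_eventually (eventually_le_atBot (0:ℝ))).exists
  obtain ⟨t2, ht2, ht2'⟩ := ((hp _ hsep).and_eventually (eventually_ge_atTop (0:ℝ))).exists
  have h12 : t1 ≤ t2 := ht1'.trans ht2'
  obtain ⟨v1, hv1, hv1c, hs1⟩ := reach hV hsplit hnm (fun x hx y hy => setDist_le hx hy) (hge t1) ht1
  obtain ⟨v2, hv2, hv2c, hs2⟩ := reach hV (hsplit.trans (union_comm _ _)) hnp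
    (fun x hx y hy => (dist_comm x y).symm ▸ setDist_le hy hx) (hge t2) ht2
  have HQ := ((hH.clamp h12).add ((IsH1loc.linear (-v1) (t1 • v1)).clamp
    (a := t1 - 1) (b := t1) (by linarith))).add ((IsH1loc.linear v2 (-(t2 • v2))).clamp
    (a := t2) (b := t2 + 1) (by linarith))
  set Q : ℝ → Euc N := _ with hQdef
  set Q' : ℝ → Euc N := _ with hQ'def
  change IsH1loc Q Q' at HQ
  have hQ1 : ∀ t ≤ t1, Q t = q t1 + (t1 - max (t1 - 1) t) • v1 := by
    intro t ht
    simp only [hQdef]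
    rw [min_eq_right (ht.trans h12), max_eq_left ht, min_eq_right ht,
      min_eq_right (by linarith : t ≤ t2 + 1), max_eq_left (by linarith : t ≤ t2)]
    module
  have hQ2 : ∀ t, t1 ≤ t → t ≤ t2 → Q t = q t := by
    intro t ht ht'
    simp only [hQdef]
    rw [min_eq_right ht', max_eq_right ht, min_eq_left ht, max_eq_right (by linarith : t1 - 1 ≤ t1),
      min_eq_right (by linarith : t ≤ t2 + 1), max_eq_left (by linarith : t ≤ t2)]
    module
  have hQ3 : ∀ t, t2 ≤ t → Q t = q t2 + (min (t2 + 1) t - t2) • v2 := by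
    intro t ht
    simp only [hQdef]
    rw [min_eq_left ht, max_eq_right h12, min_eq_left (h12.trans ht),
      max_eq_right (by linarith : t1 - 1 ≤ t1),
      max_eq_right (le_min (by linarith) ht : t2 ≤ min (t2 + 1) t)]
    module
  have hQm : ∀ t ≤ t1 - 1, Q t = q t1 + v1 := by
    intro t ht
    rw [hQ1 t (by linarith), max_eq_left ht]; simp
  have hQp : ∀ t, t2 + 1 ≤ t → Q t = q t2 + v2 := by
    intro t ht
    rw [hQ3 t (by linarith), min_eq_left ht]; simp
  have hmem : (Q, Q') ∈ Gamma V c Vm Vp := by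
    refine ⟨HQ, fun t => ?_, fun ε hε => ?_, fun ε hε => ?_⟩
    · simp only
      rcases le_total t t1 with h | h
      · rw [hQ1 t h]
        apply hs1
        have : max (t1 - 1) t ≤ t1 := max_le (by linarith) h
        have := le_max_left (t1 - 1) t
        constructor <;> linarith
      rcases le_total t t2 with h' | h'
      · rw [hQ2 t h h']; exact hge t
      · rw [hQ3 t h']
        apply hs2
        have : t2 ≤ min (t2 + 1) t := le_min (by linarith) h'
        have := min_le_left (t2 + 1) t
        constructor <;> linarith
    · refine ((eventually_le_atBot (t1 - 1)).mono fun t ht => ?_).frequently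
      simp only
      rw [hQm t ht, infDist_zero_of_mem hv1]; exact hε
    · refine ((eventually_ge_atTop (t2 + 1)).mono fun t ht => ?_).frequently
      simp only
      rw [hQp t ht, infDist_zero_of_mem hv2]; exact hε
  have hle : mc V c Vm Vp ≤ lagJ V c Q Q' univ := iInf₂_le (Q, Q') hmem
  refine hle.trans_lt ?_
  have hfin := (lagr_integrable hV c HQ (t1 - 1) (t2 + 1)).lintegral_lt_top
  refine lt_of_le_of_lt ?_ hfin
  rw [lagJ, setLIntegral_univ, ← lintegral_indicator measurableSet_Ioc]
  apply lintegral_mono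
  intro t
  by_cases ht : t ∈ Ioc (t1 - 1) (t2 + 1)
  · rw [indicator_of_mem ht]
  · rw [indicator_of_notMem ht]
    have hz : Q' t = 0 := by
      simp only [hQ'def]
      rw [indicator_of_notMem, indicator_of_notMem, indicator_of_notMem]
      · simp
      all_goals
        intro h
        exact ht ⟨by linarith [h.1], by linarith [h.2]⟩
    have hVc : V (Q t) = c := by
      by_cases h : t ≤ t1 - 1
      · rw [hQm t h]; exact hv1c
      · have : t2 + 1 ≤ t := by
          by_contra h'
          exact ht ⟨not_le.1 h, (not_le.1 h').le⟩
        rw [hQp t this]; exact hv2c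
    simp [hz, hVc]

theorem parts_scalar {f g : ℝ → ℝ} {a b : ℝ} (hf : IntervalIntegrable f volume a b)
    (hg : IntervalIntegrable g volume a b) (h0 : ∫ t in a..b, g t = 0) :
    ∫ t in a..b, f t * (∫ s in a..t, g s) = - ∫ t in a..b, (∫ s in a..t, f s) * g t := by
  have hF := hf.absolutelyContinuousOnInterval_intervalIntegral (c := a) (by simp)
  have hG := hg.absolutelyContinuousOnInterval_intervalIntegral (c := a) (by simp)
  have h := hF.integral_mul_deriv_eq_deriv_mul hG
  simp only [h0, mul_zero, intervalIntegral.integral_same, sub_zero, zero_sub] at h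
  have e1 : ∫ t in a..b, (∫ s in a..t, f s) * g t
      = ∫ x in a..b, (∫ v in a..x, f v) * deriv (fun x => ∫ v in a..x, g v) x := by
    apply intervalIntegral.integral_congr_ae
    filter_upwards [hg.ae_hasDerivAt_integral] with x hx hx'
    rw [(hx (uIoc_subset_uIcc hx') a (by simp)).deriv]
  have e2 : ∫ t in a..b, f t * (∫ s in a..t, g s)
      = ∫ x in a..b, deriv (fun x => ∫ v in a..x, f v) x * (∫ v in a..x, g v) := by
    apply intervalIntegral.integral_congr_ae
    filter_upwards [hf.ae_hasDerivAt_integral] with x hx hx'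
    rw [(hx (uIoc_subset_uIcc hx') a (by simp)).deriv]
  rw [e1, e2, h, neg_neg]

theorem coord_integral {N : ℕ} {f : ℝ → Euc N} {a b : ℝ} (hf : IntervalIntegrable f volume a b)
    (i : Fin N) : (∫ t in a..b, f t) i = ∫ t in a..b, f t i := by
  exact ((EuclideanSpace.proj (𝕜 := ℝ) i : Euc N →L[ℝ] ℝ).intervalIntegral_comp_comm hf).symm

theorem coord_ii {N : ℕ} {f : ℝ → Euc N} {a b : ℝ} (hf : IntervalIntegrable f volume a b)
    (i : Fin N) : IntervalIntegrable (fun t => f t i) volume a b :=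
  ⟨(EuclideanSpace.proj (𝕜 := ℝ) i : Euc N →L[ℝ] ℝ).integrable_comp hf.1,
   (EuclideanSpace.proj (𝕜 := ℝ) i : Euc N →L[ℝ] ℝ).integrable_comp hf.2⟩

theorem parts_vec {N : ℕ} {f g : ℝ → Euc N} {a b : ℝ}
    (hf : IntervalIntegrable f volume a b)
    (hg : IntervalIntegrable g volume a b) (h0 : ∫ t in a..b, g t = 0) :
    ∫ t in a..b, inner ℝ (f t) (∫ s in a..t, g s)
      = - ∫ t in a..b, inner ℝ (∫ s in a..t, f s) (g t) := by
  have sub : ∀ {h : ℝ → Euc N}, IntervalIntegrable h volume a b → ∀ t ∈ uIcc a b,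
      IntervalIntegrable h volume a t := fun hh t ht =>
    hh.mono_set (uIcc_subset_uIcc_left ht)
  have cp : ∀ {h : ℝ → Euc N}, IntervalIntegrable h volume a b → ∀ i,
      ContinuousOn (fun t => ∫ s in a..t, h s i) (uIcc a b) := fun hh i =>
    ((coord_ii hh i).absolutelyContinuousOnInterval_intervalIntegral
      (c := a) (by simp)).continuousOn
  have e1 : ∫ t in a..b, inner ℝ (f t) (∫ s in a..t, g s)
      = ∫ t in a..b, ∑ i, f t i * (∫ s in a..t, g s i) := by
    apply intervalIntegral.integral_congr
    intro t ht
    simp only [PiLp.inner_apply, coord_integral (sub hg t ht)]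
    exact Finset.sum_congr rfl fun i _ => by simp [mul_comm]
  have e2 : ∫ t in a..b, inner ℝ (∫ s in a..t, f s) (g t)
      = ∫ t in a..b, ∑ i, (∫ s in a..t, f s i) * g t i := by
    apply intervalIntegral.integral_congr
    intro t ht
    simp only [PiLp.inner_apply, coord_integral (sub hf t ht)]
    exact Finset.sum_congr rfl fun i _ => by simp [mul_comm]
  rw [e1, e2, intervalIntegral.integral_finsetSum, intervalIntegral.integral_finsetSum,
    ← Finset.sum_neg_distrib]
  · refine Finset.sum_congr rfl fun i _ => parts_scalar (coord_ii hf i) (coord_ii hg i) ?_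
    rw [← coord_integral hg, h0]; rfl
  · exact fun i _ => (coord_ii hg i).continuousOn_mul (cp hf i)
  · exact fun i _ => (coord_ii hf i).mul_continuousOn (cp hg i)

theorem continuous_gradient {N : ℕ} {V : Euc N → ℝ} (hV : ContDiff ℝ 1 V) :
    Continuous (gradient V) :=
  (InnerProductSpace.toDual ℝ (Euc N)).symm.continuous.comp (hV.continuous_fderiv one_ne_zero)

theorem IsH1loc.prim {N : ℕ} {g : ℝ → Euc N} (hg : Continuous g) (a : ℝ) :
    IsH1loc (fun t => ∫ s in a..t, g s) g := by
  refine ⟨hg.locallyIntegrable, fun x y => (hg.norm.pow 2).integrableOn_Icc, fun x y => ?_⟩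
  exact intervalIntegral.integral_interval_sub_left (hg.intervalIntegrable _ _)
    (hg.intervalIntegrable _ _)

theorem IsH1loc.sub_const {N : ℕ} {q q' : ℝ → Euc N} (h : IsH1loc q q') (v : Euc N) :
    IsH1loc (fun t => q t - v) q' :=
  ⟨h.1, h.2.1, fun a b => by rw [← h.2.2, sub_sub_sub_cancel_right]⟩

theorem IsH1loc.sq_ii {N : ℕ} {q q' : ℝ → Euc N} (h : IsH1loc q q') (a b : ℝ) :
    IntervalIntegrable (fun t => ‖q' t‖ ^ 2) volume a b := by
  rw [intervalIntegrable_iff]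
  exact (h.2.1 _ _).mono_set Ioc_subset_Icc_self

theorem IsH1loc.inner_ii {N : ℕ} {q q' p p' : ℝ → Euc N} (h : IsH1loc q q') (k : IsH1loc p p')
    (a b : ℝ) : IntervalIntegrable (fun t => inner ℝ (q' t) (p' t)) volume a b := by
  have := (((h.add k).sq_ii a b).sub ((h.sq_ii a b).add (k.sq_ii a b))).const_mul 2⁻¹
  refine (intervalIntegrable_congr (fun t _ => ?_)).1 this
  simp only [norm_add_sq_real]
  ring

/-- derivative of the potential part of the action -/
theorem potential_deriv {N : ℕ} {V : Euc N → ℝ} (hV : ContDiff ℝ 1 V) (c : ℝ) {q r : ℝ → Euc N}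
    (hq : Continuous q) (hr : Continuous r) (a b : ℝ) :
    HasDerivAt (fun s : ℝ => ∫ t in a..b, (V (q t + s • r t) - c))
      (∫ t in a..b, inner ℝ (gradient V (q t)) (r t)) 0 := by
  have hgc := continuous_gradient hV
  have hVc := hV.continuous
  have hcont : Continuous (fun x : ℝ × ℝ =>
      inner ℝ (gradient V (q x.2 + x.1 • r x.2)) (r x.2)) := by fun_prop
  obtain ⟨M, hM⟩ := ((isCompact_Icc (a := (-1:ℝ)) (b := 1)).prod
    (isCompact_uIcc (a := a) (b := b))).exists_bound_of_continuousOn hcont.continuousOn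
  have := (intervalIntegral.hasDerivAt_integral_of_dominated_loc_of_deriv_le
    (μ := volume) (a := a) (b := b) (x₀ := (0:ℝ)) (s := Icc (-1) 1) (bound := fun _ => M)
    (F := fun s t => V (q t + s • r t) - c)
    (F' := fun s t => inner ℝ (gradient V (q t + s • r t)) (r t))
    (Icc_mem_nhds (by norm_num) (by norm_num))
    (Eventually.of_forall fun s => (Continuous.aestronglyMeasurable (by fun_prop)))
    (Continuous.intervalIntegrable (by fun_prop) _ _)
    (Continuous.aestronglyMeasurable (by fun_prop))
    (Eventually.of_forall fun t ht s hs => hM (s, t) ⟨hs, uIoc_subset_uIcc ht⟩)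
    (intervalIntegrable_const)
    (Eventually.of_forall fun t ht s hs => ?_)).2
  · simpa using this
  · have h1 : HasFDerivAt V (fderiv ℝ V (q t + s • r t)) (q t + s • r t) :=
      (hV.differentiable one_ne_zero _).hasFDerivAt
    have h2 : HasDerivAt (fun s : ℝ => q t + s • r t) (r t) s := by
      simpa using ((hasDerivAt_id s).smul_const (r t)).const_add (q t)
    have h3 := (h1.comp_hasDerivAt s h2).sub_const c
    have : inner ℝ (gradient V (q t + s • r t)) (r t) = fderiv ℝ V (q t + s • r t) (r t) := by
      simp [gradient]
    rw [this]
    exact h3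

theorem core {N : ℕ} {V : Euc N → ℝ} (hV : ContDiff ℝ 1 V) {c : ℝ} {Vm Vp : Set (Euc N)}
    {q q' : ℝ → Euc N} (hq : (q, q') ∈ Gamma V c Vm Vp)
    (hmin : lagJ V c q q' univ = mc V c Vm Vp) (hfin : mc V c Vm Vp < ⊤)
    {a b : ℝ} (hab : a < b) (hpos : ∀ t ∈ Icc a b, c < V (q t)) :
    ∃ k : Euc N, ∀ t ∈ Icc a b,
      q t = q a + ∫ s in a..t, ((∫ u in a..s, gradient V (q u)) + k) := by
  have hH : IsH1loc q q' := hq.1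
  have hVc := hV.continuous
  have hqc := hH.cont
  have hgc : Continuous (fun t => gradient V (q t)) := (continuous_gradient hV).comp hH.cont
  set P : ℝ → Euc N := fun t => ∫ u in a..t, gradient V (q u) with hP
  have hPc : Continuous P := (IsH1loc.prim hgc a).cont
  set k : Euc N := (b - a)⁻¹ • (q b - q a - ∫ s in a..b, P s) with hk
  have hPk : Continuous (fun t => P t + k) := hPc.add continuous_const
  have hR := (hH.sub_const (q a)).add ((IsH1loc.prim hPk a).smul (-1))
  set r : ℝ → Euc N := _ with hr
  set r' : ℝ → Euc N := _ with hr'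
  change IsH1loc r r' at hR
  have hrc := hR.cont
  have hra : r a = 0 := by simp [hr]
  have hrb : r b = 0 := by
    simp only [hr]
    rw [intervalIntegral.integral_add (hPc.intervalIntegrable _ _) intervalIntegrable_const,
      intervalIntegral.integral_const, hk, smul_smul, mul_inv_cancel₀ (by linarith), one_smul]
    module
  have hrint : ∀ t, r t = ∫ s in a..t, r' s := fun t => by rw [← hR.2.2, hra, sub_zero]
  -- the variation
  have hΦ := hR.clamp hab.le
  have hφin : ∀ t ∈ Icc a b, r (max a (min b t)) = r t := fun t ht => by
    rw [min_eq_right ht.2, max_eq_right ht.1]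
  have hφout : ∀ t, t ∉ Ioc a b → r (max a (min b t)) = 0 := fun t ht => by
    rcases le_or_gt t a with h | h
    · rw [max_eq_left ((min_le_right _ _).trans h), hra]
    · have : b ≤ t := by
        by_contra h'
        exact ht ⟨h, (not_le.1 h').le⟩
      rw [min_eq_left this, max_eq_right hab.le, hrb]
  let G : ℝ → ℝ := fun s => ∫ t in a..b, (2⁻¹ * ‖q' t + s • r' t‖ ^ 2 + (V (q t + s • r t) - c))
  have hev : ∀ᶠ s in 𝓝 (0:ℝ), ∀ t ∈ Icc a b, c < V (q t + s • r t) := by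
    apply isCompact_Icc.eventually_forall_of_forall_eventually
    intro t ht
    have hcont : Continuous (fun z : ℝ × ℝ => V (q z.2 + z.1 • r z.2)) := by fun_prop
    exact hcont.continuousAt.eventually (lt_mem_nhds (by simpa using hpos t ht))
  have hloc : IsLocalMin G 0 := by
    filter_upwards [hev] with s hs
    have hS := hH.add (hΦ.smul s)
    set Q : ℝ → Euc N := _ with hQ
    set Q' : ℝ → Euc N := _ with hQ'
    change IsH1loc Q Q' at hS
    have hQin : ∀ t ∈ Ioc a b, Q t = q t + s • r t := fun t ht => by
      simp only [hQ, hφin t (Ioc_subset_Icc_self ht)]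
    have hQout : ∀ t, t ∉ Ioc a b → Q t = q t := fun t ht => by
      simp only [hQ, hφout t ht, smul_zero, add_zero]
    have hQ'in : ∀ t ∈ Ioc a b, Q' t = q' t + s • r' t := fun t ht => by
      simp only [hQ', indicator_of_mem ht]
    have hQ'out : ∀ t, t ∉ Ioc a b → Q' t = q' t := fun t ht => by
      simp only [hQ', indicator_of_notMem ht, smul_zero, add_zero]
    have hmem : (Q, Q') ∈ Gamma V c Vm Vp := by
      refine ⟨hS, fun t => ?_, fun ε hε => ?_, fun ε hε => ?_⟩
      · simp only
        by_cases ht : t ∈ Ioc a b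
        · rw [hQin t ht]; exact (hs t (Ioc_subset_Icc_self ht)).le
        · rw [hQout t ht]; exact hq.2.1 t
      · refine ((hq.2.2.1 ε hε).and_eventually (eventually_le_atBot a)).mono fun t ht => ?_
        simp only
        rw [hQout t (fun h => absurd h.1 (not_lt.2 ht.2))]; exact ht.1
      · refine ((hq.2.2.2 ε hε).and_eventually (eventually_gt_atTop b)).mono fun t ht => ?_
        simp only
        rw [hQout t (fun h => absurd h.2 (not_le.2 ht.2))]; exact ht.1
    have hle : lagJ V c q q' univ ≤ lagJ V c Q Q' univ := hmin ▸ iInf₂_le (Q, Q') hmem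
    have hsplit : ∀ p p' : ℝ → Euc N, lagJ V c p p' univ =
        lagJ V c p p' (Ioc a b) + lagJ V c p p' (Ioc a b)ᶜ := fun p p' => by
      simp only [lagJ, setLIntegral_univ]
      exact (lintegral_add_compl _ measurableSet_Ioc).symm
    have hcompl : lagJ V c Q Q' (Ioc a b)ᶜ = lagJ V c q q' (Ioc a b)ᶜ := by
      apply setLIntegral_congr_fun measurableSet_Ioc.compl
      intro t ht
      simp only [hQout t ht, hQ'out t ht]
    rw [hsplit q, hsplit Q, hcompl] at hle
    have hne : lagJ V c q q' (Ioc a b)ᶜ ≠ ⊤ := by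
      have : lagJ V c q q' (Ioc a b)ᶜ ≤ lagJ V c q q' univ := by rw [hsplit q]; exact le_add_self
      exact (this.trans_lt (hmin ▸ hfin)).ne
    have hle2 := (ENNReal.add_le_add_iff_right hne).1 hle
    have hreal : ∀ p p' : ℝ → Euc N, IsH1loc p p' → (∀ t, c ≤ V (p t)) →
        lagJ V c p p' (Ioc a b) =
        ENNReal.ofReal (∫ t in a..b, (2⁻¹ * ‖p' t‖ ^ 2 + (V (p t) - c))) := by
      intro p p' hp hpc
      rw [intervalIntegral.integral_of_le hab.le,
        ofReal_integral_eq_lintegral_ofReal (lagr_integrable hVc c hp a b)]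
      · rfl
      · refine Eventually.of_forall fun t => ?_
        have := hpc t
        simp only [Pi.zero_apply]
        have : 0 ≤ 2⁻¹ * ‖p' t‖ ^ 2 := by positivity
        linarith
    rw [hreal q q' hH hq.2.1, hreal Q Q' hS hmem.2.1, ENNReal.ofReal_le_ofReal_iff] at hle2
    · have e0 : G 0 = ∫ t in a..b, (2⁻¹ * ‖q' t‖ ^ 2 + (V (q t) - c)) := by simp [G]
      have e1 : G s = ∫ t in a..b, (2⁻¹ * ‖Q' t‖ ^ 2 + (V (Q t) - c)) := by
        apply intervalIntegral.integral_congr_ae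
        refine Eventually.of_forall fun t ht => ?_
        rw [uIoc_of_le hab.le] at ht
        rw [hQin t ht, hQ'in t ht]
      rw [e0, e1]; exact hle2
    · apply intervalIntegral.integral_nonneg hab.le
      intro t _
      have h1 : c ≤ V (Q t) := hmem.2.1 t
      have : 0 ≤ 2⁻¹ * ‖Q' t‖ ^ 2 := by positivity
      linarith
  -- derivative
  set B : ℝ := ∫ t in a..b, inner ℝ (q' t) (r' t) with hB
  set W : ℝ := ∫ t in a..b, inner ℝ (gradient V (q t)) (r t) with hW
  have hder : HasDerivAt G (B + W) 0 := by
    have hGe : G = fun s => ((∫ t in a..b, 2⁻¹ * ‖q' t‖ ^ 2) + s * B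
        + s ^ 2 * (∫ t in a..b, 2⁻¹ * ‖r' t‖ ^ 2)) + ∫ t in a..b, (V (q t + s • r t) - c) := by
      funext s
      have i1 := (hH.sq_ii a b).const_mul 2⁻¹
      have i2 := (hH.inner_ii hR a b).const_mul s
      have i3 := ((hR.sq_ii a b).const_mul 2⁻¹).const_mul (s ^ 2)
      have i4 : IntervalIntegrable (fun t => V (q t + s • r t) - c) volume a b :=
        Continuous.intervalIntegrable (by fun_prop) _ _
      rw [hB, ← intervalIntegral.integral_const_mul, ← intervalIntegral.integral_const_mul,
        ← intervalIntegral.integral_add i1 i2, ← intervalIntegral.integral_add (i1.add i2) i3,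
        ← intervalIntegral.integral_add ((i1.add i2).add i3) i4]
      apply intervalIntegral.integral_congr
      intro t _
      simp only
      rw [norm_add_sq_real, inner_smul_right, norm_smul, mul_pow, Real.norm_eq_abs, sq_abs]
      ring
    rw [hGe]
    refine HasDerivAt.add ?_ (potential_deriv hV c hqc hrc a b)
    have h1 := ((hasDerivAt_id (0:ℝ)).mul_const B).const_add (∫ t in a..b, 2⁻¹ * ‖q' t‖ ^ 2)
    have h2 := ((hasDerivAt_id (0:ℝ)).pow 2).mul_const (∫ t in a..b, 2⁻¹ * ‖r' t‖ ^ 2)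
    have h3 := h1.fun_add h2
    simpa using h3
  have hzero : B + W = 0 := hloc.hasDerivAt_eq_zero hder
  have hr0 : ∫ s in a..b, r' s = 0 := by rw [← hrint, hrb]
  have hWp : W = - ∫ t in a..b, inner ℝ (P t) (r' t) := by
    rw [← parts_vec (hgc.intervalIntegrable _ _) (hR.ii a b) hr0, hW]
    simp only [← hrint]
  have hPi := (IsH1loc.prim hPc a).inner_ii hR a b
  have hki := (IsH1loc.prim (continuous_const (y := k)) a).inner_ii hR a b
  have hkz : ∫ t in a..b, inner ℝ k (r' t) = 0 := by
    have := (innerSL ℝ k).intervalIntegral_comp_comm (hR.ii a b)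
    rw [hr0, map_zero] at this
    exact this
  have hsq : ∫ t in a..b, ‖r' t‖ ^ 2 = 0 := by
    have : ∫ t in a..b, ‖r' t‖ ^ 2 = B - (∫ t in a..b, inner ℝ (P t) (r' t))
        - ∫ t in a..b, inner ℝ k (r' t) := by
      rw [hB, ← intervalIntegral.integral_sub (hH.inner_ii hR a b) hPi,
        ← intervalIntegral.integral_sub ((hH.inner_ii hR a b).sub hPi) hki]
      apply intervalIntegral.integral_congr
      intro t _
      simp only
      rw [← inner_sub_left, ← inner_sub_left, ← real_inner_self_eq_norm_sq]
      congr 1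
      simp only [hr']
      module
    rw [this, hkz]; linarith
  have hae : ∀ᵐ t ∂(volume.restrict (Ioc a b)), r' t = 0 := by
    rw [intervalIntegral.integral_of_le hab.le, integral_eq_zero_iff_of_nonneg
      (fun t => by positivity) ((intervalIntegrable_iff_integrableOn_Ioc_of_le hab.le).1
        (hR.sq_ii a b))] at hsq
    filter_upwards [hsq] with t ht
    simpa using ht
  refine ⟨k, fun t ht => ?_⟩
  have hrt : r t = 0 := by
    rw [hrint]
    apply intervalIntegral.integral_zero_ae
    rw [ae_restrict_iff' measurableSet_Ioc] at hae
    filter_upwards [hae] with s hs hs'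
    rw [uIoc_of_le ht.1] at hs'
    exact hs ⟨hs'.1, hs'.2.trans ht.2⟩
  simp only [hr] at hrt
  have h3 : q t - q a = ∫ s in a..t, (P s + k) := by
    rw [neg_one_smul, ← sub_eq_add_neg, sub_eq_zero] at hrt
    exact hrt
  rw [← h3]; abel
/-- Lemma 2.5: minimizers are classical solutions of `q̈ = ∇V(q)` on `(α_q, ω_q)`. -/
theorem minimizer_is_solution {N : ℕ} (hN : 0 < N) (V : Euc N → ℝ) (hV : ContDiff ℝ 1 V)
    (c : ℝ) (Vm Vp : Set (Euc N)) (hVm : IsClosed Vm) (hVp : IsClosed Vp)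
    (hsplit : {x | V x ≤ c} = Vm ∪ Vp) (hsep : 0 < setDist Vm Vp)
    (R : ℝ) (hR : 0 < R) (hcoer : Coercive V c Vm Vp R)
    (q q' : ℝ → Euc N) (hq : MemM V c Vm Vp R q q') :
    ContDiffOn ℝ 2 q {t : ℝ | alphaQ Vm q < (t : EReal) ∧ (t : EReal) < omegaQ Vm Vp q} ∧
    ∀ t : ℝ, alphaQ Vm q < (t : EReal) → (t : EReal) < omegaQ Vm Vp q →
      deriv (deriv q) t = gradient V (q t) := by
  obtain ⟨hG, -, hmin, -⟩ := hq
  have hH : IsH1loc q q' := hG.1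
  have hfin := mc_lt_top hV.continuous hsplit hsep hG
  set U : Set ℝ := {t : ℝ | alphaQ Vm q < (t : EReal) ∧ (t : EReal) < omegaQ Vm Vp q} with hU
  have hUo : IsOpen U :=
    (isOpen_lt continuous_const continuous_coe_real_ereal).inter
      (isOpen_lt continuous_coe_real_ereal continuous_const)
  have hVU : ∀ t ∈ U, c < V (q t) := by
    intro t ht
    by_contra hcon
    have hm : q t ∈ Vm ∪ Vp := by rw [← hsplit]; exact not_lt.1 hcon
    rcases hm with h | h
    · exact absurd ht.1 (not_lt.2 (le_sSup ⟨t, rfl, h⟩))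
    · exact absurd ht.2 (not_lt.2 (sInf_le ⟨t, rfl, ht.1, h⟩))
  have hgc : Continuous (fun t => gradient V (q t)) := (continuous_gradient hV).comp hH.cont
  have key : ∀ t ∈ U, DifferentiableAt ℝ q t ∧ HasDerivAt (deriv q) (gradient V (q t)) t := by
    intro t ht
    obtain ⟨ε, hε, hball⟩ := Metric.isOpen_iff.1 hUo t ht
    have hIcc : ∀ s ∈ Icc (t - ε / 2) (t + ε / 2), c < V (q s) := by
      intro s hs
      apply hVU s (hball _)
      rw [Metric.mem_ball, Real.dist_eq, abs_lt]
      constructor <;> linarith [hs.1, hs.2]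
    obtain ⟨k, hk⟩ := core hV hG hmin hfin (by linarith : t - ε / 2 < t + ε / 2) hIcc
    set a := t - ε / 2 with ha
    have hPc : Continuous (fun s => (∫ u in a..s, gradient V (q u)) + k) :=
      (IsH1loc.prim hgc a).cont.add continuous_const
    have hd : ∀ s ∈ Ioo a (t + ε / 2), HasDerivAt q ((∫ u in a..s, gradient V (q u)) + k) s := by
      intro s hs
      have h1 := (hPc.integral_hasStrictDerivAt a s).hasDerivAt.const_add (q a)
      refine h1.congr_of_eventuallyEq ?_
      filter_upwards [Ioo_mem_nhds hs.1 hs.2] with x hx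
      exact hk x (Ioo_subset_Icc_self hx)
    have htm : t ∈ Ioo a (t + ε / 2) := ⟨by linarith, by linarith⟩
    refine ⟨(hd t htm).differentiableAt, ?_⟩
    have h2 := (hgc.integral_hasStrictDerivAt a t).hasDerivAt.add_const k
    refine h2.congr_of_eventuallyEq ?_
    filter_upwards [Ioo_mem_nhds htm.1 htm.2] with x hx
    exact (hd x hx).deriv
  refine ⟨?_, fun t h1 h2 => (key t ⟨h1, h2⟩).2.deriv⟩
  have h2 : (2 : WithTop ℕ∞) = 1 + 1 := by norm_num
  have h1 : (1 : WithTop ℕ∞) = 0 + 1 := by norm_num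
  rw [h2, contDiffOn_succ_iff_deriv_of_isOpen hUo]
  refine ⟨fun t ht => (key t ht).1.differentiableWithinAt, by simp, ?_⟩
  rw [h1, contDiffOn_succ_iff_deriv_of_isOpen hUo]
  refine ⟨fun t ht => (key t ht).2.differentiableAt.differentiableWithinAt, by simp, ?_⟩
  rw [contDiffOn_zero]
  exact hgc.continuousOn.congr fun t ht => (key t ht).2.deriv
end
end
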